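/- arXiv:2010.15204 — 3 statements merged into one kernel-verified Lean document; each statement's English description precedes it below -/
import Mathlib

section
/- Let γ₁, γ₂ : [a,b] → ℝ³ be constant-speed curves with L(γ₁) = L(γ₂) and |γ₁(t)| = |γ₂(t)| ≥ 1 for all t ∈ [a,b]. Then H(γ₁) = H(γ₂), and hence E(γ₁) = E(γ₂). -/
open MeasureTheory Set Real
open scoped ENNReal NNReal RealInnerProductSpace

noncomputable section

abbrev E3 := EuclideanSpace ℝ (Fin 3)

/-- The horizon of a curve: the measure, counted with multiplicity, of the set of points
`p` of the unit sphere whose tangent plane `{x : ⟨x,p⟩ = 1}` meets the curve. -/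
def horizon (a b : ℝ) (γ : ℝ → E3) : ℝ≥0∞ :=
  ∫⁻ p : Metric.sphere (0 : E3) 1,
    ({t ∈ Set.Ico a b | ⟪γ t, (p : E3)⟫ = 1}.encard : ℝ≥0∞)
      ∂((volume : Measure E3).toSphere)

lemma encard_iUnion_nat {α : Type*} (t : ℕ → Set α) (ht : Pairwise (Function.onFun Disjoint t)) :
    ((⋃ n, t n).encard : ℝ≥0∞) = ∑' n, ((t n).encard : ℝ≥0∞) := by
  let _ : MeasurableSpace α := ⊤
  have h : ∀ s : Set α, Measure.count s = (s.encard : ℝ≥0∞) := fun s =>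
    Measure.count_apply (MeasurableSpace.measurableSet_top)
  simp only [← h]
  exact measure_iUnion ht (fun n => MeasurableSpace.measurableSet_top)

lemma encard_union_coe {α : Type*} {s t : Set α} (h : Disjoint s t) :
    ((s ∪ t).encard : ℝ≥0∞) = (s.encard : ℝ≥0∞) + (t.encard : ℝ≥0∞) := by
  rw [Set.encard_union_eq h]; simp

lemma area_inj_pieces (f : E3 → E3) (s : Set E3)
    (hd : ∀ x ∈ s, DifferentiableAt ℝ f x) (h0 : ∀ x ∈ s, (fderiv ℝ f x).det ≠ 0) :
    ∃ t : ℕ → Set E3, Pairwise (Function.onFun Disjoint t) ∧ (∀ n, MeasurableSet (t n)) ∧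
      s ⊆ ⋃ n, t n ∧ ∀ n, InjOn f (s ∩ t n) := by
  classical
  have key : ∀ A : E3 →L[ℝ] E3, ∃ r : ℝ≥0, r ≠ 0 ∧ (A.det ≠ 0 → ∀ u : Set E3,
      ApproximatesLinearOn f A u r → InjOn f u) := by
    intro A
    by_cases hA : A.det = 0
    · exact ⟨1, one_ne_zero, fun h => absurd hA h⟩
    · let A' : E3 ≃L[ℝ] E3 := A.toContinuousLinearEquivOfDetNeZero hA
      have hAA : (A' : E3 →L[ℝ] E3) = A := by ext; rfl
      have hpos : 0 < ‖(A'.symm : E3 →L[ℝ] E3)‖₊⁻¹ := by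
        have := A'.nnnorm_symm_pos
        positivity
      refine ⟨‖(A'.symm : E3 →L[ℝ] E3)‖₊⁻¹ / 2, (half_pos hpos).ne', fun _ u hu => ?_⟩
      rw [← hAA] at hu
      exact hu.injOn (Or.inr (half_lt_self hpos))
  choose r hr hr' using key
  obtain ⟨t, A, h1, h2, h3, h4, h5⟩ := exists_partition_approximatesLinearOn_of_hasFDerivWithinAt
    f s (fderiv ℝ f) (fun x hx => (hd x hx).hasFDerivAt.hasFDerivWithinAt) r hr
  refine ⟨t, h1, h2, h3, fun n => ?_⟩
  rcases s.eq_empty_or_nonempty with hs | hs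
  · simp [hs]
  · obtain ⟨y, hy, hAy⟩ := h5 hs n
    exact hr' (A n) (hAy ▸ h0 y hy) _ (h4 n)

lemma area_nonsing (f : E3 → E3) (s : Set E3) (hs : MeasurableSet s)
    (hd : ∀ x ∈ s, DifferentiableAt ℝ f x) (h0 : ∀ x ∈ s, (fderiv ℝ f x).det ≠ 0) :
    Measurable (fun y => ((s ∩ f ⁻¹' {y}).encard : ℝ≥0∞)) ∧
    ∫⁻ y, ((s ∩ f ⁻¹' {y}).encard : ℝ≥0∞) = ∫⁻ x in s, ENNReal.ofReal |(fderiv ℝ f x).det| := by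
  classical
  obtain ⟨t, h1, h2, h3, h4⟩ := area_inj_pieces f s hd h0
  have hmi : ∀ n, MeasurableSet (f '' (s ∩ t n)) := fun n =>
    measurable_image_of_fderivWithin (hs.inter (h2 n))
      (fun x hx => (hd x hx.1).hasFDerivAt.hasFDerivWithinAt) (h4 n)
  have hdisj : Pairwise (Function.onFun Disjoint fun n => s ∩ t n) := fun i j hij =>
    (h1 hij).mono inter_subset_right inter_subset_right
  have hU : s = ⋃ n, s ∩ t n := by rw [← inter_iUnion, inter_eq_left.2 h3]
  have hfun : (fun y => ((s ∩ f ⁻¹' {y}).encard : ℝ≥0∞)) =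
      fun y => ∑' n, (f '' (s ∩ t n)).indicator (fun _ => (1 : ℝ≥0∞)) y := by
    funext y
    have e : s ∩ f ⁻¹' {y} = ⋃ n, (s ∩ t n) ∩ f ⁻¹' {y} := by
      rw [← iUnion_inter, ← hU]
    rw [e, encard_iUnion_nat]
    · congr 1; funext n
      by_cases hy : y ∈ f '' (s ∩ t n)
      · obtain ⟨x, hx, rfl⟩ := hy
        rw [indicator_of_mem (mem_image_of_mem f hx)]
        have : (s ∩ t n) ∩ f ⁻¹' {f x} = {x} := by
          ext z; constructor
          · rintro ⟨hz, hz'⟩; exact h4 n hz hx hz'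
          · rintro rfl; exact ⟨hx, rfl⟩
        rw [this]; simp
      · rw [indicator_of_notMem hy]
        have : (s ∩ t n) ∩ f ⁻¹' {y} = ∅ := by
          ext z; simp only [mem_empty_iff_false, iff_false]
          rintro ⟨hz, hz'⟩; exact hy ⟨z, hz, hz'⟩
        rw [this]; simp
    · exact fun i j hij => (hdisj hij).mono inter_subset_left inter_subset_left
  rw [hfun]
  have hm : ∀ n, Measurable ((f '' (s ∩ t n)).indicator (fun _ => (1 : ℝ≥0∞))) := fun n =>
    measurable_const.indicator (hmi n)
  refine ⟨Measurable.ennreal_tsum hm, ?_⟩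
  rw [lintegral_tsum (fun n => (hm n).aemeasurable)]
  conv_rhs => rw [hU]
  rw [lintegral_iUnion (fun n => hs.inter (h2 n)) hdisj]
  congr 1; funext n
  rw [lintegral_indicator_const (hmi n), one_mul]
  exact (lintegral_abs_det_fderiv_eq_addHaar_image volume (hs.inter (h2 n))
      (fun x hx => (hd x hx.1).hasFDerivAt.hasFDerivWithinAt) (h4 n)).symm

/-- Area formula with multiplicity. -/
lemma area_mult (f : E3 → E3) (s : Set E3) (hs : MeasurableSet s)
    (hnull : volume (f '' (s ∩ {x | ¬ DifferentiableAt ℝ f x})) = 0) :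
    AEMeasurable (fun y => ((s ∩ f ⁻¹' {y}).encard : ℝ≥0∞)) ∧
    ∫⁻ y, ((s ∩ f ⁻¹' {y}).encard : ℝ≥0∞) = ∫⁻ x in s, ENNReal.ofReal |(fderiv ℝ f x).det| := by
  have hmdet : Measurable (fun x => (fderiv ℝ f x).det) :=
    ContinuousLinearMap.continuous_det.measurable.comp (measurable_fderiv ℝ f)
  have hZ : MeasurableSet {x | (fderiv ℝ f x).det = 0} := hmdet (measurableSet_singleton 0)
  set Z := {x | (fderiv ℝ f x).det = 0} with hZdef
  have hdZ : ∀ x ∈ s \ Z, DifferentiableAt ℝ f x := by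
    intro x hx
    by_contra h
    apply hx.2
    show (fderiv ℝ f x).det = 0
    rw [fderiv_zero_of_not_differentiableAt h]
    simp [ContinuousLinearMap.det]
  obtain ⟨hm, hI⟩ := area_nonsing f (s \ Z) (hs.diff hZ) hdZ (fun x hx => hx.2)
  have him : volume (f '' (s ∩ Z)) = 0 := by
    have : s ∩ Z ⊆ (s ∩ {x | ¬ DifferentiableAt ℝ f x}) ∪ {x | x ∈ s ∩ Z ∧ DifferentiableAt ℝ f x} := by
      intro x hx
      by_cases h : DifferentiableAt ℝ f x
      · exact Or.inr ⟨hx, h⟩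
      · exact Or.inl ⟨hx.1, h⟩
    refine measure_mono_null (image_mono this) ?_
    rw [image_union]
    refine measure_union_null hnull ?_
    exact addHaar_image_eq_zero_of_det_fderivWithin_eq_zero volume
      (fun x hx => hx.2.hasFDerivAt.hasFDerivWithinAt) (fun x hx => hx.1.2)
  have hae : (fun y => ((s ∩ f ⁻¹' {y}).encard : ℝ≥0∞)) =ᵐ[volume]
      (fun y => (((s \ Z) ∩ f ⁻¹' {y}).encard : ℝ≥0∞)) := by
    filter_upwards [compl_mem_ae_iff.2 him] with y hy
    congr 2
    ext x
    constructor
    · rintro ⟨h1, h2⟩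
      refine ⟨⟨h1, fun hx => hy ⟨x, ⟨h1, hx⟩, h2⟩⟩, h2⟩
    · rintro ⟨h1, h2⟩
      exact ⟨h1.1, h2⟩
  refine ⟨⟨_, hm, hae⟩, ?_⟩
  rw [lintegral_congr_ae hae, hI, ← lintegral_inter_add_sdiff _ s hZ]
  have : ∫⁻ x in s ∩ Z, ENNReal.ofReal |(fderiv ℝ f x).det| = 0 := by
    rw [setLIntegral_congr_fun (g := fun _ => 0) (hs.inter hZ)]
    · simp
    · intro x hx
      have : (fderiv ℝ f x).det = 0 := hx.2
      simp [this]
  rw [this, zero_add]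

lemma null_image_of_locLip {f : E3 → E3} {s : Set E3} (hs : volume s = 0)
    (hf : ∀ x ∈ s, ∃ K : ℝ≥0, ∃ t ∈ nhdsWithin x s, LipschitzOnWith K f t) :
    volume (f '' s) = 0 := by
  have hH : (Measure.hausdorffMeasure (3 : ℝ) : Measure E3) ≪ volume := by
    have := MeasureTheory.isAddHaarMeasure_hausdorffMeasure (E := E3)
    simp only [finrank_euclideanSpace, Fintype.card_fin, Nat.cast_ofNat] at this
    exact Measure.absolutelyContinuous_isAddHaarMeasure _ _
  have hH' : (volume : Measure E3) ≪ (Measure.hausdorffMeasure (3 : ℝ) : Measure E3) := by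
    have := MeasureTheory.isAddHaarMeasure_hausdorffMeasure (E := E3)
    simp only [finrank_euclideanSpace, Fintype.card_fin, Nat.cast_ofNat] at this
    exact Measure.absolutelyContinuous_isAddHaarMeasure _ _
  choose! K t ht hL using hf
  obtain ⟨c, hcs, hc, hsub⟩ := TopologicalSpace.countable_cover_nhdsWithin ht
  have : f '' s ⊆ ⋃ x ∈ c, f '' (t x ∩ s) := by
    rintro _ ⟨y, hy, rfl⟩
    obtain ⟨x, hx, hyx⟩ := mem_iUnion₂.1 (hsub hy)
    exact mem_iUnion₂.2 ⟨x, hx, mem_image_of_mem f ⟨hyx, hy⟩⟩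
  refine measure_mono_null this ((measure_biUnion_null_iff hc).2 fun x hx => hH' ?_)
  have h1 := ((hL x (hcs hx)).mono (inter_subset_left (t := s))).hausdorffMeasure_image_le (d := 3) (by norm_num)
  have h2 : Measure.hausdorffMeasure (3 : ℝ) (t x ∩ s) = 0 :=
    hH (measure_mono_null inter_subset_right hs)
  rw [h2, mul_zero] at h1
  exact le_antisymm h1 zero_le


lemma sphere_to_ball (N : Metric.sphere (0 : E3) 1 → ℝ≥0∞) (M : E3 → ℝ≥0∞)
    (hM : ∀ (p : Metric.sphere (0 : E3) 1) (l : ℝ), 0 < l → l < 1 → M (l • (p : E3)) = N p)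
    (hM' : ∀ x : E3, 1 ≤ ‖x‖ → M x = 0) (hm : AEMeasurable M) :
    (∫⁻ p, N p ∂((volume : Measure E3).toSphere)) *
      Measure.volumeIoiPow 2 (Iio ⟨1, mem_Ioi.2 one_pos⟩) = ∫⁻ x, M x := by
  have hmp := (volume : Measure E3).measurePreserving_homeomorphUnitSphereProd
  simp only [finrank_euclideanSpace, Fintype.card_fin, Nat.add_one_sub_one] at hmp
  set I : Set (Ioi (0 : ℝ)) := Iio ⟨1, mem_Ioi.2 one_pos⟩ with hI
  have hIm : MeasurableSet I := measurableSet_Iio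
  set G : Metric.sphere (0 : E3) 1 × Ioi (0 : ℝ) → ℝ≥0∞ := fun q => M (q.2.1 • (q.1 : E3)) with hG
  have hGx : ∀ x : ({0}ᶜ : Set E3), G (homeomorphUnitSphereProd E3 x) = M x := by
    intro x
    have : ((homeomorphUnitSphereProd E3).symm (homeomorphUnitSphereProd E3 x)) = x := by simp
    conv_rhs => rw [← this]
    simp only [hG, homeomorphUnitSphereProd_symm_apply_coe]
  have hme : MeasurableEmbedding (homeomorphUnitSphereProd E3) := Homeomorph.measurableEmbedding _
  have hcomap : AEMeasurable (fun x : ({0}ᶜ : Set E3) => M x.1) (Measure.comap Subtype.val volume) := by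
    refine hm.comp_quasiMeasurePreserving ⟨measurable_subtype_coe, ?_⟩
    rw [map_comap_subtype_coe (measurableSet_singleton _).compl]
    exact Measure.absolutelyContinuous_of_le Measure.restrict_le_self
  have hGm : AEMeasurable G ((volume : Measure E3).toSphere.prod (Measure.volumeIoiPow 2)) := by
    rw [← hmp.map_eq]
    refine (hme.aemeasurable_map_iff).2 ?_
    exact hcomap.congr (Filter.Eventually.of_forall fun x => (hGx x).symm)
  have hGI : G = (univ ×ˢ I).indicator (fun q => N q.1) := by
    funext q
    by_cases hq : q.2 ∈ I
    · rw [indicator_of_mem (by simp [hq])]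
      exact hM q.1 q.2.1 q.2.2 hq
    · rw [indicator_of_notMem (by simp [hq])]
      apply hM'
      have h1 : ¬ (q.2.1 < 1) := hq
      have h2 : (0:ℝ) < q.2.1 := q.2.2
      rw [norm_smul, norm_eq_of_mem_sphere, mul_one, Real.norm_of_nonneg h2.le]
      linarith
  have hNm : AEMeasurable N ((volume : Measure E3).toSphere) := by
    rw [hGI, aemeasurable_indicator_iff (MeasurableSet.univ.prod hIm),
      ← Measure.prod_restrict, Measure.restrict_univ] at hGm
    refine (AEStronglyMeasurable.of_comp_fst hGm.aestronglyMeasurable ?_).aemeasurable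
    intro h
    have := Measure.restrict_eq_zero.1 h
    rw [hI, Measure.volumeIoiPow_apply_Iio] at this
    norm_num at this
  have e1 : ∫⁻ x, M x = ∫⁻ q, G q ∂((volume : Measure E3).toSphere.prod (Measure.volumeIoiPow 2)) := by
    rw [← hmp.lintegral_comp_emb hme]
    simp only [hGx]
    rw [lintegral_subtype_comap (measurableSet_singleton _).compl, restrict_compl_singleton]
  rw [e1, hGI, lintegral_indicator (MeasurableSet.univ.prod hIm), ← Measure.prod_restrict,
    Measure.restrict_univ]
  have := lintegral_prod_mul (μ := (volume : Measure E3).toSphere)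
    (ν := (Measure.volumeIoiPow 2).restrict I) (f := N) (g := fun _ => 1) hNm aemeasurable_const
  simp only [mul_one, lintegral_one, Measure.restrict_apply_univ] at this
  rw [this]

def boxE (B : Set ℝ) : Set E3 := {u | u 0 ∈ B ∧ u 1 ∈ Ioo (0:ℝ) 1 ∧ u 2 ∈ Ioc (-π) π}

lemma measurable_coordE (i : Fin 3) : Measurable (fun u : E3 => u i) := by fun_prop

lemma measurableSet_boxE {B : Set ℝ} (hB : MeasurableSet B) : MeasurableSet (boxE B) :=
  ((measurable_coordE 0) hB).inter
    (((measurable_coordE 1) measurableSet_Ioo).inter ((measurable_coordE 2) measurableSet_Ioc))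

lemma mp_E3 : MeasurePreserving (fun q : ℝ × ℝ × ℝ => (!₂[q.1, q.2.1, q.2.2] : E3)) := by
  have h1 := (EuclideanSpace.volume_preserving_symm_measurableEquiv_toLp (Fin 3)).symm
  have h2 := (volume_preserving_piFinSuccAbove (fun _ : Fin 3 => ℝ) 0).symm
  have h3 := (volume_preserving_finTwoArrow ℝ).symm
  have h4 := (MeasurePreserving.id (volume : Measure ℝ)).prod h3
  have := h1.comp (h2.comp h4)
  have e : (fun q : ℝ × ℝ × ℝ => (!₂[q.1, q.2.1, q.2.2] : E3)) =
      ⇑(MeasurableEquiv.toLp 2 (Fin 3 → ℝ)).symm.symm ∘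
      ⇑(MeasurableEquiv.piFinSuccAbove (fun _ : Fin 3 => ℝ) 0).symm ∘
      Prod.map id ⇑MeasurableEquiv.finTwoArrow.symm := by
    funext q
    ext i
    fin_cases i <;> rfl
  rw [e]
  exact this

lemma mp_E3_emb : MeasurableEmbedding (fun q : ℝ × ℝ × ℝ => (!₂[q.1, q.2.1, q.2.2] : E3)) := by
  refine Continuous.measurableEmbedding (by fun_prop) ?_
  intro q q' h
  have h0 := congrArg (fun u : E3 => u 0) h
  have h1 := congrArg (fun u : E3 => u 1) h
  have h2 := congrArg (fun u : E3 => u 2) h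
  simp at h0 h1 h2
  exact Prod.ext h0 (Prod.ext h1 h2)

lemma lintegral_boxE {B : Set ℝ} {g : E3 → ℝ≥0∞} (hg : Measurable g) :
    ∫⁻ u in boxE B, g u =
      ∫⁻ t in B, ∫⁻ l in Ioo (0:ℝ) 1, ∫⁻ θ in Ioc (-π) π, g !₂[t, l, θ] := by
  have hpre : (fun q : ℝ × ℝ × ℝ => (!₂[q.1, q.2.1, q.2.2] : E3)) ⁻¹' (boxE B) =
      B ×ˢ (Ioo (0:ℝ) 1 ×ˢ Ioc (-π) π) := by
    ext q; simp [boxE]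
  have hg' : Measurable (fun q : ℝ × ℝ × ℝ => g !₂[q.1, q.2.1, q.2.2]) :=
    hg.comp mp_E3.measurable
  rw [← mp_E3.setLIntegral_comp_preimage_emb mp_E3_emb, hpre, Measure.volume_eq_prod,
    ← Measure.prod_restrict, lintegral_prod _ hg'.aemeasurable]
  refine lintegral_congr fun t => ?_
  rw [Measure.volume_eq_prod, ← Measure.prod_restrict, lintegral_prod]
  exact (hg'.comp (measurable_const.prodMk measurable_id)).aemeasurable


def thetaInt (A q : ℝ) : ℝ≥0∞ := ∫⁻ θ in Ioc (-π) π, ENNReal.ofReal |A + √q * cos θ|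

lemma thetaInt_eq (A a b : ℝ) :
    ∫⁻ θ in Ioc (-π) π, ENNReal.ofReal |A + (a * cos θ + b * sin θ)| = thetaInt A (a ^ 2 + b ^ 2) := by
  set z : ℂ := ⟨a, b⟩ with hz
  have hR : √(a ^ 2 + b ^ 2) = ‖z‖ := by
    rw [Complex.norm_def, Complex.normSq_apply, hz]; congr 1; ring
  have ha : a = ‖z‖ * cos z.arg := by rw [Complex.norm_mul_cos_arg]
  have hb : b = ‖z‖ * sin z.arg := by rw [Complex.norm_mul_sin_arg]
  set F : ℝ → ℝ := fun θ => |A + ‖z‖ * cos θ| with hF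
  have hFc : Continuous F := by fun_prop
  have hFp : Function.Periodic F (2 * π) := by intro θ; simp [hF]
  have conv : ∀ G : ℝ → ℝ, Continuous G → (∀ x, 0 ≤ G x) →
      ∫⁻ θ in Ioc (-π) π, ENNReal.ofReal (G θ) = ENNReal.ofReal (∫ θ in (-π)..π, G θ) := by
    intro G hG h0
    rw [intervalIntegral.integral_of_le (by linarith [pi_pos]),
      ofReal_integral_eq_lintegral_ofReal]
    · exact (hG.intervalIntegrable (-π) π).1
    · exact Filter.Eventually.of_forall h0
  have e1 : ∀ θ, |A + (a * cos θ + b * sin θ)| = F (θ - z.arg) := by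
    intro θ
    simp only [hF]
    rw [cos_sub]
    congr 2
    conv_lhs => rw [ha, hb]
    ring
  unfold thetaInt
  rw [hR]
  simp only [e1]
  rw [conv (fun θ => F (θ - z.arg)) (by fun_prop) (fun x => abs_nonneg _), conv F hFc (fun x => abs_nonneg _)]
  congr 1
  rw [intervalIntegral.integral_comp_sub_right]
  have := hFp.intervalIntegral_add_eq (-π - z.arg) (-π)
  rw [show -π - z.arg + 2 * π = π - z.arg by ring, show -π + 2 * π = π by ring] at this
  exact this

lemma inner_E3 (x y : E3) : ⟪x, y⟫ = x 0 * y 0 + x 1 * y 1 + x 2 * y 2 := by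
  simp [PiLp.inner_apply, Fin.sum_univ_three]; ring

lemma gram_det (w p τ g : E3) :
    (w 0 * (p 1 * τ 2 - p 2 * τ 1) - p 0 * (w 1 * τ 2 - w 2 * τ 1) + τ 0 * (w 1 * p 2 - w 2 * p 1)) *
    (g 0 * (p 1 * τ 2 - p 2 * τ 1) - p 0 * (g 1 * τ 2 - g 2 * τ 1) + τ 0 * (g 1 * p 2 - g 2 * p 1)) =
    ⟪w, g⟫ * (⟪p, p⟫ * ⟪τ, τ⟫ - ⟪p, τ⟫ * ⟪p, τ⟫) - ⟪w, p⟫ * (⟪p, g⟫ * ⟪τ, τ⟫ - ⟪p, τ⟫ * ⟪τ, g⟫)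
      + ⟪w, τ⟫ * (⟪p, g⟫ * ⟪p, τ⟫ - ⟪p, p⟫ * ⟪τ, g⟫) := by
  simp only [inner_E3]
  ring

lemma abs_det_eq (L : E3 →L[ℝ] E3) (l m r : ℝ) (g w p τ : E3)
    (h0 : L (EuclideanSpace.single 0 1) = l • w) (h1 : L (EuclideanSpace.single 1 1) = p)
    (h2 : L (EuclideanSpace.single 2 1) = l • τ)
    (hpp : ⟪p, p⟫ = 1) (hwp : ⟪w, p⟫ = 0) (hgp : ⟪g, p⟫ = 1) (hgw : ⟪g, w⟫ = - m)
    (hτp : ⟪τ, p⟫ = 0) (hτg : ⟪τ, g⟫ = 0) (hτ : ⟪τ, τ⟫ = 1 - 1 / r ^ 2) (hg : ⟪g, g⟫ = r ^ 2)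
    (hr : 1 < r) : |L.det| = |l ^ 2 / r * m| := by
  have hdet : L.det = (Matrix.of ![![l * w 0, p 0, l * τ 0], ![l * w 1, p 1, l * τ 1],
      ![l * w 2, p 2, l * τ 2]]).det := by
    rw [ContinuousLinearMap.det, ← LinearMap.det_toMatrix (EuclideanSpace.basisFun (Fin 3) ℝ).toBasis]
    congr 1
    ext i j
    rw [LinearMap.toMatrix_apply]
    fin_cases j
    · have : (EuclideanSpace.basisFun (Fin 3) ℝ).toBasis 0 = EuclideanSpace.single 0 1 := by simp
      simp [h0]
      fin_cases i <;> simp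
    · simp [h1]
      fin_cases i <;> simp
    · simp [h2]
      fin_cases i <;> simp
  rw [hdet, Matrix.det_fin_three]
  simp only [Matrix.of_apply, Matrix.cons_val', Matrix.cons_val_zero, Matrix.cons_val_one, Matrix.cons_val]
  have hr0 : 0 < r := by linarith
  have hDK := gram_det w p τ g
  have hKK := gram_det g p τ g
  rw [real_inner_comm τ p] at hDK hKK
  rw [real_inner_comm g p, hpp, hwp, hgp, real_inner_comm g w, hgw, hτp, hτg, hτ] at hDK
  rw [real_inner_comm g p, hpp, hgp, hτp, hτg, hτ, hg] at hKK
  set D := w 0 * (p 1 * τ 2 - p 2 * τ 1) - p 0 * (w 1 * τ 2 - w 2 * τ 1)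
    + τ 0 * (w 1 * p 2 - w 2 * p 1) with hD
  set K := g 0 * (p 1 * τ 2 - p 2 * τ 1) - p 0 * (g 1 * τ 2 - g 2 * τ 1)
    + τ 0 * (g 1 * p 2 - g 2 * p 1) with hK
  have hs : 0 < r ^ 2 - 1 := by nlinarith
  have hKK' : K * K * r ^ 2 = (r ^ 2 - 1) ^ 2 := by rw [hKK]; field_simp; ring
  have hDK' : D * K * r ^ 2 = - m * (r ^ 2 - 1) := by rw [hDK]; field_simp; ring
  have hD2 : D ^ 2 * r ^ 2 = m ^ 2 := by
    have : (D ^ 2 * r ^ 2) * (r ^ 2 - 1) ^ 2 = m ^ 2 * (r ^ 2 - 1) ^ 2 := by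
      rw [← hKK']
      calc D ^ 2 * r ^ 2 * (K * K * r ^ 2) = (D * K * r ^ 2) ^ 2 := by ring
        _ = _ := by rw [hDK', hKK']; ring
    exact mul_right_cancel₀ (by positivity) this
  have e : l * w 0 * p 1 * (l * τ 2) - l * w 0 * (l * τ 1) * p 2 - p 0 * (l * w 1) * (l * τ 2) +
      p 0 * (l * τ 1) * (l * w 2) + l * τ 0 * (l * w 1) * p 2 - l * τ 0 * p 1 * (l * w 2) = l ^ 2 * D := by
    rw [hD]; ring
  rw [← sq_eq_sq_iff_abs_eq_abs]
  have e2 : (l ^ 2 / r * m) ^ 2 = (l ^ 2 * D) ^ 2 := by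
    rw [mul_pow, ← hD2]; field_simp
  rw [e2, ← e]


structure FrameOn (U : Set E3) (e f : E3 → E3) : Prop where
  isOpen : IsOpen U
  ne : ∀ g ∈ U, g ≠ 0
  ce : ∀ g ∈ U, ContDiffAt ℝ 1 e g
  cf : ∀ g ∈ U, ContDiffAt ℝ 1 f g
  ee : ∀ g ∈ U, ⟪e g, e g⟫ = 1
  ff : ∀ g ∈ U, ⟪f g, f g⟫ = 1
  ef : ∀ g ∈ U, ⟪e g, f g⟫ = 0
  ge : ∀ g ∈ U, ⟪g, e g⟫ = 0
  gf : ∀ g ∈ U, ⟪g, f g⟫ = 0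

lemma contDiff_coordE (i : Fin 3) : ContDiff ℝ 1 (fun u : E3 => u i) := by fun_prop

lemma frame_exists_0 : ∃ e f, FrameOn {g : E3 | g 1 ^ 2 + g 2 ^ 2 ≠ 0} e f := by
  have hc : ∀ g : E3, g 1 ^ 2 + g 2 ^ 2 ≠ 0 →
      ContDiffAt ℝ 1 (fun g : E3 => (√(g 1 ^ 2 + g 2 ^ 2))⁻¹) g := by
    intro g hg
    refine ContDiffAt.inv (ContDiffAt.sqrt (by fun_prop) hg) ?_
    rw [Real.sqrt_ne_zero']; positivity
  have hn : ∀ g : E3, g 1 ^ 2 + g 2 ^ 2 ≠ 0 → g ≠ 0 := by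
    rintro g hg rfl; simp at hg
  have hnn : ∀ g : E3, g ≠ 0 → ContDiffAt ℝ 1 (fun g : E3 => ‖g‖⁻¹) g := fun g hg =>
    ContDiffAt.inv (contDiffAt_norm ℝ hg) (norm_ne_zero_iff.2 hg)
  refine ⟨fun g => (√(g 1 ^ 2 + g 2 ^ 2))⁻¹ • !₂[0, g 2, - g 1],
    fun g => (‖g‖⁻¹ * (√(g 1 ^ 2 + g 2 ^ 2))⁻¹) • !₂[-(g 1 ^ 2 + g 2 ^ 2), g 0 * g 1, g 0 * g 2],
    ?_, hn, ?_, ?_, ?_, ?_, ?_, ?_, ?_⟩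
  · exact isOpen_ne_fun (by fun_prop) (by fun_prop)
  · intro g hg
    exact (hc g hg).smul (contDiff_euclidean.2 (by intro i; fin_cases i <;> simp <;> fun_prop)).contDiffAt
  · intro g hg
    exact ((hnn g (hn g hg)).mul (hc g hg)).smul (contDiff_euclidean.2 (by intro i; fin_cases i <;> simp <;> fun_prop)).contDiffAt
  · intro g hg
    have h : √(g 1 ^ 2 + g 2 ^ 2) ^ 2 = g 1 ^ 2 + g 2 ^ 2 := Real.sq_sqrt (by positivity)
    have h' : √(g 1 ^ 2 + g 2 ^ 2) ≠ 0 := by rw [Real.sqrt_ne_zero']; have : g 1 ^ 2 + g 2 ^ 2 ≠ 0 := hg; positivity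
    rw [inner_E3]
    simp
    field_simp
    linarith
  · intro g hg
    have h : √(g 1 ^ 2 + g 2 ^ 2) ^ 2 = g 1 ^ 2 + g 2 ^ 2 := Real.sq_sqrt (by positivity)
    have h' : √(g 1 ^ 2 + g 2 ^ 2) ≠ 0 := by rw [Real.sqrt_ne_zero']; have : g 1 ^ 2 + g 2 ^ 2 ≠ 0 := hg; positivity
    have h2 : ‖g‖ ^ 2 = g 0 * g 0 + g 1 * g 1 + g 2 * g 2 := by rw [← inner_E3, real_inner_self_eq_norm_sq]
    have h3 : ‖g‖ ≠ 0 := norm_ne_zero_iff.2 (hn g hg)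
    rw [inner_E3]
    simp
    field_simp
    rw [h, h2]
    ring
  · intro g hg
    rw [inner_E3]
    simp
    ring
  · intro g hg
    rw [inner_E3]
    simp
    ring
  · intro g hg
    rw [inner_E3]
    simp
    ring

lemma frame_exists_1 : ∃ e f, FrameOn {g : E3 | g 0 ^ 2 + g 2 ^ 2 ≠ 0} e f := by
  have hc : ∀ g : E3, g 0 ^ 2 + g 2 ^ 2 ≠ 0 →
      ContDiffAt ℝ 1 (fun g : E3 => (√(g 0 ^ 2 + g 2 ^ 2))⁻¹) g := by
    intro g hg
    refine ContDiffAt.inv (ContDiffAt.sqrt (by fun_prop) hg) ?_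
    rw [Real.sqrt_ne_zero']; positivity
  have hn : ∀ g : E3, g 0 ^ 2 + g 2 ^ 2 ≠ 0 → g ≠ 0 := by
    rintro g hg rfl; simp at hg
  have hnn : ∀ g : E3, g ≠ 0 → ContDiffAt ℝ 1 (fun g : E3 => ‖g‖⁻¹) g := fun g hg =>
    ContDiffAt.inv (contDiffAt_norm ℝ hg) (norm_ne_zero_iff.2 hg)
  refine ⟨fun g => (√(g 0 ^ 2 + g 2 ^ 2))⁻¹ • !₂[- g 2, 0, g 0],
    fun g => (‖g‖⁻¹ * (√(g 0 ^ 2 + g 2 ^ 2))⁻¹) • !₂[g 0 * g 1, -(g 0 ^ 2 + g 2 ^ 2), g 1 * g 2],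
    ?_, hn, ?_, ?_, ?_, ?_, ?_, ?_, ?_⟩
  · exact isOpen_ne_fun (by fun_prop) (by fun_prop)
  · intro g hg
    exact (hc g hg).smul (contDiff_euclidean.2 (by intro i; fin_cases i <;> simp <;> fun_prop)).contDiffAt
  · intro g hg
    exact ((hnn g (hn g hg)).mul (hc g hg)).smul (contDiff_euclidean.2 (by intro i; fin_cases i <;> simp <;> fun_prop)).contDiffAt
  · intro g hg
    have h : √(g 0 ^ 2 + g 2 ^ 2) ^ 2 = g 0 ^ 2 + g 2 ^ 2 := Real.sq_sqrt (by positivity)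
    have h' : √(g 0 ^ 2 + g 2 ^ 2) ≠ 0 := by rw [Real.sqrt_ne_zero']; have : g 0 ^ 2 + g 2 ^ 2 ≠ 0 := hg; positivity
    rw [inner_E3]
    simp
    field_simp
    linarith
  · intro g hg
    have h : √(g 0 ^ 2 + g 2 ^ 2) ^ 2 = g 0 ^ 2 + g 2 ^ 2 := Real.sq_sqrt (by positivity)
    have h' : √(g 0 ^ 2 + g 2 ^ 2) ≠ 0 := by rw [Real.sqrt_ne_zero']; have : g 0 ^ 2 + g 2 ^ 2 ≠ 0 := hg; positivity
    have h2 : ‖g‖ ^ 2 = g 0 * g 0 + g 1 * g 1 + g 2 * g 2 := by rw [← inner_E3, real_inner_self_eq_norm_sq]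
    have h3 : ‖g‖ ≠ 0 := norm_ne_zero_iff.2 (hn g hg)
    rw [inner_E3]
    simp
    field_simp
    rw [h, h2]
    ring
  · intro g hg
    rw [inner_E3]
    simp
    ring
  · intro g hg
    rw [inner_E3]
    simp
    ring
  · intro g hg
    rw [inner_E3]
    simp
    ring

namespace FrameOn
variable {U : Set E3} {e f : E3 → E3}

lemma orthonormal (h : FrameOn U e f) {g : E3} (hg : g ∈ U) :
    Orthonormal ℝ ![‖g‖⁻¹ • g, e g, f g] := by
  have hg0 : ‖g‖ ≠ 0 := norm_ne_zero_iff.2 (h.ne g hg)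
  have hee := h.ee g hg
  have hff := h.ff g hg
  rw [real_inner_self_eq_norm_sq] at hee hff
  have hee' : ‖e g‖ = 1 := (pow_eq_one_iff_of_nonneg (norm_nonneg _) two_ne_zero).1 hee
  have hff' : ‖f g‖ = 1 := (pow_eq_one_iff_of_nonneg (norm_nonneg _) two_ne_zero).1 hff
  constructor
  · intro i
    fin_cases i
    · simp [norm_smul, hg0]
    · simpa using hee'
    · simpa using hff'
  · intro i j hij
    have h1 := h.ef g hg
    have h2 := h.ge g hg
    have h3 := h.gf g hg
    have h1' := h1; have h2' := h2; have h3' := h3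
    rw [real_inner_comm] at h1' h2' h3'
    fin_cases i <;> fin_cases j <;> simp [inner_smul_left, inner_smul_right, *] at hij ⊢

lemma expand (h : FrameOn U e f) {g : E3} (hg : g ∈ U) (x : E3) :
    x = (⟪g, x⟫ / ‖g‖ ^ 2) • g + (⟪e g, x⟫ • e g + ⟪f g, x⟫ • f g) := by
  have ho := h.orthonormal hg
  let b := (basisOfOrthonormalOfCardEqFinrank ho (by simp)).toOrthonormalBasis (by simpa using ho)
  have := b.sum_repr' x
  simp [b, Fin.sum_univ_three, inner_smul_left] at this
  conv_lhs => rw [← this]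
  rw [smul_smul, add_assoc]
  congr 2
  field_simp

lemma parseval (h : FrameOn U e f) {g : E3} (hg : g ∈ U) (x : E3) :
    ⟪e g, x⟫ ^ 2 + ⟪f g, x⟫ ^ 2 = ‖x‖ ^ 2 - ⟪g, x⟫ ^ 2 / ‖g‖ ^ 2 := by
  have ho := h.orthonormal hg
  let b := (basisOfOrthonormalOfCardEqFinrank ho (by simp)).toOrthonormalBasis (by simpa using ho)
  have := b.sum_sq_norm_inner_right x
  simp [b, Fin.sum_univ_three, inner_smul_left] at this
  rw [← this]
  ring

end FrameOn

/-- parametrization of the circle of tangency -/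
def circ (e f : E3 → E3) (g : E3) (θ : ℝ) : E3 :=
  (‖g‖ ^ 2)⁻¹ • g + √(1 - (‖g‖ ^ 2)⁻¹) • (cos θ • e g + sin θ • f g)

def circ' (e f : E3 → E3) (g : E3) (θ : ℝ) : E3 :=
  √(1 - (‖g‖ ^ 2)⁻¹) • (-sin θ • e g + cos θ • f g)

namespace FrameOn
variable {U : Set E3} {e f : E3 → E3}

lemma pos_aux {g : E3} (h1 : 1 < ‖g‖) : 0 < 1 - (‖g‖ ^ 2)⁻¹ := by
  have : (‖g‖ ^ 2)⁻¹ < 1 := inv_lt_one_of_one_lt₀ (by nlinarith)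
  linarith

lemma inner_circ (h : FrameOn U e f) {g : E3} (hg : g ∈ U) (θ : ℝ) :
    ⟪g, circ e f g θ⟫ = 1 := by
  have hg0 : ‖g‖ ≠ 0 := norm_ne_zero_iff.2 (h.ne g hg)
  simp [circ, inner_add_right, inner_smul_right, h.ge g hg, h.gf g hg, hg0]

lemma circ_self (h : FrameOn U e f) {g : E3} (hg : g ∈ U) (h1 : 1 < ‖g‖) (θ : ℝ) :
    ⟪circ e f g θ, circ e f g θ⟫ = 1 := by
  have hg0 : ‖g‖ ≠ 0 := norm_ne_zero_iff.2 (h.ne g hg)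
  have hs := Real.mul_self_sqrt (pos_aux h1).le
  have a1 := h.ef g hg
  have a2 := h.ge g hg
  have a3 := h.gf g hg
  have a1' := a1; have a2' := a2; have a3' := a3
  rw [real_inner_comm] at a1' a2' a3'
  simp only [circ, inner_add_right, inner_add_left, inner_smul_left, inner_smul_right, a1, a2, a3, a1', a2', a3',
    h.ee g hg, h.ff g hg, real_inner_self_eq_norm_sq, RCLike.conj_to_real]
  have : (‖g‖ ^ 2)⁻¹ * ((‖g‖ ^ 2)⁻¹ * ‖g‖ ^ 2) = (‖g‖ ^ 2)⁻¹ := by field_simp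
  linear_combination this + hs * (cos θ ^ 2 + sin θ ^ 2) + (1 - (‖g‖ ^ 2)⁻¹) * (Real.cos_sq_add_sin_sq θ)

lemma circ'_self (h : FrameOn U e f) {g : E3} (hg : g ∈ U) (h1 : 1 < ‖g‖) (θ : ℝ) :
    ⟪circ' e f g θ, circ' e f g θ⟫ = 1 - 1 / ‖g‖ ^ 2 := by
  have hs := Real.mul_self_sqrt (pos_aux h1).le
  have a1 := h.ef g hg
  have a1' := a1
  rw [real_inner_comm] at a1'
  simp only [circ', inner_add_right, inner_add_left, inner_smul_left, inner_smul_right, a1, a1',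
    h.ee g hg, h.ff g hg, RCLike.conj_to_real, one_div]
  linear_combination hs * (cos θ ^ 2 + sin θ ^ 2) + (1 - (‖g‖ ^ 2)⁻¹) * (Real.cos_sq_add_sin_sq θ)

lemma circ'_circ (h : FrameOn U e f) {g : E3} (hg : g ∈ U) (θ : ℝ) :
    ⟪circ' e f g θ, circ e f g θ⟫ = 0 := by
  have a1 := h.ef g hg
  have a2 := h.ge g hg
  have a3 := h.gf g hg
  have a1' := a1; have a2' := a2; have a3' := a3
  rw [real_inner_comm] at a1' a2' a3'
  simp only [circ, circ', inner_add_right, inner_add_left, inner_smul_left, inner_smul_right, a1, a2, a3, a1', a2', a3',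
    h.ee g hg, h.ff g hg, RCLike.conj_to_real]
  ring

lemma circ'_g (h : FrameOn U e f) {g : E3} (hg : g ∈ U) (θ : ℝ) :
    ⟪circ' e f g θ, g⟫ = 0 := by
  have a2 := h.ge g hg
  have a3 := h.gf g hg
  rw [real_inner_comm] at a2 a3
  simp [circ', inner_add_left, inner_smul_left, a2, a3]

lemma exists_theta (h : FrameOn U e f) {g : E3} (hg : g ∈ U) {x : E3}
    (hx : ‖x‖ = 1) (hgx : ⟪g, x⟫ = 1) : ∃ θ ∈ Ioc (-π) π, circ e f g θ = x := by
  have hp := h.parseval hg x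
  rw [hx, hgx] at hp
  set z : ℂ := ⟨⟪e g, x⟫, ⟪f g, x⟫⟩ with hz
  have hR : √(1 - (‖g‖ ^ 2)⁻¹) = ‖z‖ := by
    rw [Complex.norm_def, Complex.normSq_apply, hz]; congr 1; ring_nf; ring_nf at hp; linarith
  refine ⟨z.arg, Complex.arg_mem_Ioc z, ?_⟩
  rw [h.expand hg x, circ, hgx, one_div, hR, smul_add, smul_smul, smul_smul,
    Complex.norm_mul_cos_arg, Complex.norm_mul_sin_arg]

lemma theta_unique (h : FrameOn U e f) {g : E3} (hg : g ∈ U) (h1 : 1 < ‖g‖) {θ θ' : ℝ}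
    (hθ : θ ∈ Ioc (-π) π) (hθ' : θ' ∈ Ioc (-π) π) (heq : circ e f g θ = circ e f g θ') : θ = θ' := by
  have hs : √(1 - (‖g‖ ^ 2)⁻¹) ≠ 0 := (Real.sqrt_pos.2 (pos_aux h1)).ne'
  have a1 := h.ef g hg
  have a2 := h.ge g hg
  have a3 := h.gf g hg
  rw [real_inner_comm] at a2 a3
  have a1' := a1
  rw [real_inner_comm] at a1'
  have he := congrArg (fun v => ⟪e g, v⟫) heq
  have hf := congrArg (fun v => ⟪f g, v⟫) heq
  simp [circ, inner_add_right, inner_smul_right, a1, a1', a2, a3, h.ee g hg, h.ff g hg, -inner_self_eq_norm_sq_to_K] at he hf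
  have hc : cos θ = cos θ' := he.resolve_right hs
  have hss : sin θ = sin θ' := hf.resolve_right hs
  have e1 := Complex.arg_cos_add_sin_mul_I hθ
  have e2 := Complex.arg_cos_add_sin_mul_I hθ'
  rw [← e1, ← e2, ← Complex.ofReal_cos, ← Complex.ofReal_sin, hc, hss, Complex.ofReal_cos, Complex.ofReal_sin]

lemma contDiffAt_circ (h : FrameOn U e f) {g : E3} (hg : g ∈ U) (h1 : 1 < ‖g‖) (θ : ℝ) :
    ContDiffAt ℝ 1 (fun q : E3 × ℝ => circ e f q.1 q.2) (g, θ) := by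
  have hg0 : ‖g‖ ^ 2 ≠ 0 := pow_ne_zero _ (norm_ne_zero_iff.2 (h.ne g hg))
  have c1 : ContDiffAt ℝ 1 (fun q : E3 × ℝ => (‖q.1‖ ^ 2)⁻¹) (g, θ) :=
    ContDiffAt.inv (contDiffAt_fst.norm_sq ℝ) hg0
  have c2 : ContDiffAt ℝ 1 (fun q : E3 × ℝ => √(1 - (‖q.1‖ ^ 2)⁻¹)) (g, θ) :=
    (contDiffAt_const.sub c1).sqrt (pos_aux h1).ne'
  have c3 : ContDiffAt ℝ 1 (fun q : E3 × ℝ => e q.1) (g, θ) :=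
    ContDiffAt.comp (g, θ) (h.ce g hg) contDiffAt_fst
  have c4 : ContDiffAt ℝ 1 (fun q : E3 × ℝ => f q.1) (g, θ) :=
    ContDiffAt.comp (g, θ) (h.cf g hg) contDiffAt_fst
  exact (c1.smul contDiffAt_fst).add (c2.smul ((contDiffAt_snd.cos.smul c3).add (contDiffAt_snd.sin.smul c4)))

lemma hasDerivAt_circ (g : E3) (θ : ℝ) : HasDerivAt (circ e f g) (circ' e f g θ) θ := by
  unfold circ circ'
  have h1 := ((Real.hasDerivAt_cos θ).smul_const (e g)).add
    ((Real.hasDerivAt_sin θ).smul_const (f g))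
  exact (h1.const_smul (√(1 - (‖g‖ ^ 2)⁻¹))).const_add _

end FrameOn


def Psi (e f : E3 → E3) (γ : ℝ → E3) (u : E3) : E3 := u 1 • circ e f (γ (u 0)) (u 2)

open Classical in
def Mfun (γ : ℝ → E3) (B : Set ℝ) (x : E3) : ℝ≥0∞ :=
  if 0 < ‖x‖ ∧ ‖x‖ < 1 then ({t ∈ B | ⟪γ t, x⟫ = ‖x‖}.encard : ℝ≥0∞) else 0

def Kfun (γ : ℝ → E3) (t : ℝ) : ℝ≥0∞ :=
  ∫⁻ l in Ioo (0:ℝ) 1, thetaInt (l ^ 2 / ‖γ t‖ * (⟪γ t, deriv γ t⟫ / ‖γ t‖ ^ 2))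
    ((l ^ 2 / ‖γ t‖) ^ 2 * (1 - (‖γ t‖ ^ 2)⁻¹) *
      (‖deriv γ t‖ ^ 2 - ⟪γ t, deriv γ t⟫ ^ 2 / ‖γ t‖ ^ 2))

namespace FrameOn
variable {U : Set E3} {e f : E3 → E3}

lemma norm_circ (h : FrameOn U e f) {g : E3} (hg : g ∈ U) (h1 : 1 < ‖g‖) (θ : ℝ) :
    ‖circ e f g θ‖ = 1 := by
  have := h.circ_self hg h1 θ
  rw [real_inner_self_eq_norm_sq] at this
  exact (pow_eq_one_iff_of_nonneg (norm_nonneg _) two_ne_zero).1 this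

lemma count_eq (h : FrameOn U e f) {γ : ℝ → E3} {B : Set ℝ}
    (hB : ∀ t ∈ B, γ t ∈ U ∧ 1 < ‖γ t‖) (x : E3) :
    ((boxE B ∩ Psi e f γ ⁻¹' {x}).encard : ℝ≥0∞) = Mfun γ B x := by
  have hnorm : ∀ u ∈ boxE B ∩ Psi e f γ ⁻¹' {x}, ‖x‖ = u 1 := by
    rintro u ⟨⟨h0, h1, h2⟩, hx⟩
    have hx' : Psi e f γ u = x := hx
    rw [← hx', Psi, norm_smul, h.norm_circ (hB _ h0).1 (hB _ h0).2, mul_one,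
      Real.norm_of_nonneg h1.1.le]
  unfold Mfun
  split_ifs with hx
  · congr 1
    have himg : {t ∈ B | ⟪γ t, x⟫ = ‖x‖} = (fun u : E3 => u 0) '' (boxE B ∩ Psi e f γ ⁻¹' {x}) := by
      ext t
      constructor
      · rintro ⟨ht, htx⟩
        obtain ⟨θ, hθ, hc⟩ := h.exists_theta (hB t ht).1 (x := ‖x‖⁻¹ • x)
          (by rw [norm_smul, norm_inv, norm_norm, inv_mul_cancel₀ hx.1.ne'])
          (by rw [inner_smul_right, htx, inv_mul_cancel₀ hx.1.ne'])
        refine ⟨!₂[t, ‖x‖, θ], ⟨⟨by simpa using ht, by simpa using hx, by simpa using hθ⟩, ?_⟩, by simp⟩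
        simp [Psi, hc, smul_smul, mul_inv_cancel₀ hx.1.ne']
      · rintro ⟨u, hu, rfl⟩
        refine ⟨hu.1.1, ?_⟩
        rw [hnorm u hu]
        have hx' : Psi e f γ u = x := hu.2
        simp only
        rw [← hx', Psi, inner_smul_right, h.inner_circ (hB _ hu.1.1).1, mul_one]
    rw [himg, InjOn.encard_image]
    intro u hu v hv huv
    have huv0 : u 0 = v 0 := huv
    have huv1 : u 1 = v 1 := by rw [← hnorm u hu, ← hnorm v hv]
    have huv2 : u 2 = v 2 := by
      refine h.theta_unique (hB _ hu.1.1).1 (hB _ hu.1.1).2 hu.1.2.2 hv.1.2.2 ?_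
      have e1 : Psi e f γ u = Psi e f γ v := (show Psi e f γ u = x from hu.2).trans (show Psi e f γ v = x from hv.2).symm
      unfold Psi at e1
      rw [huv1, ← huv0] at e1
      exact smul_right_injective _ hv.1.2.1.1.ne' e1
    ext i
    fin_cases i
    · exact huv0
    · exact huv1
    · exact huv2
  · have : boxE B ∩ Psi e f γ ⁻¹' {x} = ∅ := by
      by_contra hne
      obtain ⟨u, hu⟩ := nonempty_iff_ne_empty.2 hne
      apply hx
      rw [hnorm u hu]
      exact hu.1.2.1
    rw [this]; simp

lemma psi_diff_det (h : FrameOn U e f) {γ : ℝ → E3} {u : E3} (hU : γ (u 0) ∈ U)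
    (h1 : 1 < ‖γ (u 0)‖) (hd : DifferentiableAt ℝ γ (u 0)) :
    DifferentiableAt ℝ (Psi e f γ) u ∧
    |(fderiv ℝ (Psi e f γ) u).det| =
      |(u 1) ^ 2 / ‖γ (u 0)‖ * ⟪deriv γ (u 0), circ e f (γ (u 0)) (u 2)⟫| := by
  set t := u 0 with ht
  set θ := u 2 with hθ
  have hc := (h.contDiffAt_circ hU h1 θ).differentiableAt one_ne_zero
  set DC := fderiv ℝ (fun q : E3 × ℝ => circ e f q.1 q.2) (γ t, θ) with hDC
  have hcD : HasFDerivAt (fun q : E3 × ℝ => circ e f q.1 q.2) DC (γ t, θ) := hc.hasFDerivAt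
  let pr : Fin 3 → E3 →L[ℝ] ℝ := fun i => EuclideanSpace.proj i
  have hpr : ∀ i (v : E3), HasFDerivAt (fun u : E3 => u i) (pr i) v := fun i v =>
    (pr i).hasFDerivAt
  have hγ : HasFDerivAt (fun u : E3 => γ (u 0)) (((1 : ℝ →L[ℝ] ℝ).smulRight (deriv γ t)).comp (pr 0)) u := by
    have := HasFDerivAt.comp u (g := γ) (f := fun u : E3 => u 0) (hd.hasDerivAt.hasFDerivAt) (hpr 0 u)
    exact this
  have hQ : HasFDerivAt (fun u : E3 => circ e f (γ (u 0)) (u 2)) _ u :=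
    HasFDerivAt.comp u (g := fun q : E3 × ℝ => circ e f q.1 q.2)
      (f := fun u : E3 => (γ (u 0), u 2)) hcD (hγ.prodMk (hpr 2 u))
  have hP : HasFDerivAt (Psi e f γ) _ u := (hpr 1 u).smul hQ
  refine ⟨hP.differentiableAt, ?_⟩
  rw [hP.fderiv]
  -- derivative in time
  have hk : HasDerivAt (fun s => circ e f (γ s) θ) (DC (deriv γ t, 0)) t := by
    exact HasFDerivAt.comp_hasDerivAt t (l := fun q : E3 × ℝ => circ e f q.1 q.2)
      (f := fun s => (γ s, θ)) hcD (hd.hasDerivAt.prodMk (hasDerivAt_const t θ))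
  have hθd : HasDerivAt (fun s => circ e f (γ t) s) (DC (0, 1)) θ := by
    exact HasFDerivAt.comp_hasDerivAt θ (l := fun q : E3 × ℝ => circ e f q.1 q.2)
      (f := fun s => (γ t, s)) hcD ((hasDerivAt_const θ (γ t)).prodMk (hasDerivAt_id θ))
  have hθe : DC (0, 1) = circ' e f (γ t) θ := hθd.unique (hasDerivAt_circ (γ t) θ)
  have hev : ∀ᶠ s in nhds t, γ s ∈ U ∧ 1 < ‖γ s‖ := by
    have c := hd.continuousAt
    exact (c.eventually (h.isOpen.mem_nhds hU)).and (c.norm.eventually (lt_mem_nhds h1))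
  have d1 : ⟪DC (deriv γ t, 0), circ e f (γ t) θ⟫ = 0 := by
    have a := hk.inner ℝ hk
    have b : HasDerivAt (fun s => ⟪circ e f (γ s) θ, circ e f (γ s) θ⟫) 0 t := by
      refine (hasDerivAt_const t (1:ℝ)).congr_of_eventuallyEq ?_
      filter_upwards [hev] with s hs
      exact h.circ_self hs.1 hs.2 θ
    have c := a.unique b
    rw [real_inner_comm] at c
    linarith
  have d2 : ⟪γ t, DC (deriv γ t, 0)⟫ = - ⟪deriv γ t, circ e f (γ t) θ⟫ := by
    have a := hd.hasDerivAt.inner ℝ hk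
    have b : HasDerivAt (fun s => ⟪γ s, circ e f (γ s) θ⟫) 0 t := by
      refine (hasDerivAt_const t (1:ℝ)).congr_of_eventuallyEq ?_
      filter_upwards [hev] with s hs
      exact h.inner_circ hs.1 θ
    have c := a.unique b
    linarith
  refine abs_det_eq _ (u 1) _ ‖γ t‖ (γ t) (DC (deriv γ t, 0)) (circ e f (γ t) θ) (DC (0, 1)) ?_ ?_ ?_
    (h.circ_self hU h1 θ) d1 (h.inner_circ hU θ) d2 ?_ ?_ ?_ (real_inner_self_eq_norm_sq _) h1
  · simp [pr]
  · have : ((0 : E3), (0:ℝ)) = 0 := rfl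
    simp [pr, this, ← ht, ← hθ]
  · simp [pr]
  · rw [hθe]; exact h.circ'_circ hU θ
  · rw [hθe]; exact h.circ'_g hU θ
  · rw [hθe]; exact h.circ'_self hU h1 θ

lemma null_coord {N : Set ℝ} (hN : volume N = 0) : volume {u : E3 | u 0 ∈ N} = 0 := by
  rw [← mp_E3.measure_preimage_emb mp_E3_emb]
  have : (fun q : ℝ × ℝ × ℝ => (!₂[q.1, q.2.1, q.2.2] : E3)) ⁻¹' {u : E3 | u 0 ∈ N} = N ×ˢ univ := by
    ext q; simp
  rw [this, Measure.volume_eq_prod, Measure.prod_prod, hN, zero_mul]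

lemma lip_coord (i : Fin 3) : LipschitzWith ‖(EuclideanSpace.proj i : E3 →L[ℝ] ℝ)‖₊ (fun u : E3 => u i) :=
  (EuclideanSpace.proj i : E3 →L[ℝ] ℝ).lipschitz

lemma psi_locLip (h : FrameOn U e f) {γ : ℝ → E3} {C : ℝ≥0} (hγ : LipschitzWith C γ) {u : E3}
    (hU : γ (u 0) ∈ U) (h1 : 1 < ‖γ (u 0)‖) :
    ∃ K : ℝ≥0, ∃ t ∈ nhds u, LipschitzOnWith K (Psi e f γ) t := by
  have hc : ContDiffAt ℝ 1 (fun q : (E3 × ℝ) × ℝ => q.2 • circ e f q.1.1 q.1.2)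
      ((γ (u 0), u 2), u 1) := by
    have h0 : ContDiffAt ℝ 1 (fun q : (E3 × ℝ) × ℝ => circ e f q.1.1 q.1.2)
        ((γ (u 0), u 2), u 1) :=
      ContDiffAt.comp (g := fun q : E3 × ℝ => circ e f q.1 q.2) (f := fun q : (E3 × ℝ) × ℝ => q.1)
        ((γ (u 0), u 2), u 1) (h.contDiffAt_circ hU h1 (u 2)) contDiffAt_fst
    exact contDiffAt_snd.smul h0
  obtain ⟨K, s, hs, hL⟩ := hc.exists_lipschitzOnWith
  have hJ := ((hγ.comp (lip_coord 0)).prodMk (lip_coord 2)).prodMk (lip_coord 1)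
  refine ⟨_, _, hJ.continuous.continuousAt.preimage_mem_nhds hs,
    LipschitzOnWith.comp (f := fun u : E3 => ((γ (u 0), u 2), u 1)) hL (hJ.lipschitzOnWith) (mapsTo_preimage _ _)⟩

lemma piece (h : FrameOn U e f) {γ : ℝ → E3} {C : ℝ≥0} (hγ : LipschitzWith C γ) {B : Set ℝ}
    (hBm : MeasurableSet B) (hB : ∀ t ∈ B, γ t ∈ U ∧ 1 < ‖γ t‖) :
    AEMeasurable (Mfun γ B) ∧ ∫⁻ x, Mfun γ B x = ∫⁻ t in B, Kfun γ t := by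
  have hae : ∀ᵐ t : ℝ, DifferentiableAt ℝ γ t := hγ.ae_differentiableAt
  have hnull : volume (Psi e f γ '' (boxE B ∩ {x | ¬ DifferentiableAt ℝ (Psi e f γ) x})) = 0 := by
    refine null_image_of_locLip ?_ ?_
    · refine measure_mono_null ?_ (null_coord (N := {t | ¬ DifferentiableAt ℝ γ t}) hae)
      rintro u ⟨hu, hnd⟩ hd
      exact hnd (h.psi_diff_det (hB _ hu.1).1 (hB _ hu.1).2 hd).1
    · rintro u ⟨hu, -⟩
      obtain ⟨K, t, ht, hL⟩ := h.psi_locLip hγ (hB _ hu.1).1 (hB _ hu.1).2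
      exact ⟨K, t, mem_nhdsWithin_of_mem_nhds ht, hL⟩
  obtain ⟨hm, hI⟩ := area_mult (Psi e f γ) (boxE B) (measurableSet_boxE hBm) hnull
  simp only [h.count_eq hB] at hm hI
  refine ⟨hm, ?_⟩
  have hmdet : Measurable (fun x => ENNReal.ofReal |(fderiv ℝ (Psi e f γ) x).det|) := by
    have : Measurable (fun x => (fderiv ℝ (Psi e f γ) x).det) :=
      ContinuousLinearMap.continuous_det.measurable.comp (measurable_fderiv ℝ _)
    exact ENNReal.measurable_ofReal.comp (continuous_abs.measurable.comp this)
  rw [hI, lintegral_boxE hmdet]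
  refine setLIntegral_congr_fun_ae hBm ?_
  filter_upwards [hae] with t ht htB
  unfold Kfun
  refine lintegral_congr fun l => ?_
  obtain ⟨hU, h1⟩ := hB t htB
  have key : ∀ θ, |(fderiv ℝ (Psi e f γ) !₂[t, l, θ]).det| =
      |l ^ 2 / ‖γ t‖ * (⟪γ t, deriv γ t⟫ / ‖γ t‖ ^ 2) +
        ((l ^ 2 / ‖γ t‖ * √(1 - (‖γ t‖ ^ 2)⁻¹) * ⟪e (γ t), deriv γ t⟫) * cos θ +
          (l ^ 2 / ‖γ t‖ * √(1 - (‖γ t‖ ^ 2)⁻¹) * ⟪f (γ t), deriv γ t⟫) * sin θ)| := by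
    intro θ
    have := (h.psi_diff_det (u := !₂[t, l, θ]) (by simpa using hU) (by simpa using h1) (by simpa using ht)).2
    rw [this]
    simp [circ, inner_add_right, inner_smul_right, -abs_mul]
    rw [real_inner_comm (γ t), real_inner_comm (e (γ t)), real_inner_comm (f (γ t))]
    congr 1
    ring
  simp only [key]
  rw [thetaInt_eq]
  congr 1
  have hs := Real.mul_self_sqrt (pos_aux h1).le
  rw [← h.parseval hU]
  linear_combination (l ^ 2 / ‖γ t‖) ^ 2 * (⟪e (γ t), deriv γ t⟫ ^ 2 + ⟪f (γ t), deriv γ t⟫ ^ 2) * hs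

end FrameOn



lemma Mfun_union {γ : ℝ → E3} {A B : Set ℝ} (h : Disjoint A B) (x : E3) :
    Mfun γ (A ∪ B) x = Mfun γ A x + Mfun γ B x := by
  unfold Mfun
  split_ifs with hx
  · have : {t ∈ A ∪ B | ⟪γ t, x⟫ = ‖x‖} = {t ∈ A | ⟪γ t, x⟫ = ‖x‖} ∪ {t ∈ B | ⟪γ t, x⟫ = ‖x‖} := by
      ext t; simp only [mem_setOf_eq, mem_union]; tauto
    rw [this]
    refine encard_union_coe (h.mono (fun t ht => ht.1) (fun t ht => ht.1))
  · simp

lemma Mfun_unit {γ : ℝ → E3} {C : ℝ≥0} (hγ : LipschitzWith C γ) {B : Set ℝ}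
    (hB : ∀ t ∈ B, ‖γ t‖ = 1) : Mfun γ B =ᵐ[volume] fun _ => 0 := by
  have hnull : volume ((fun u : E3 => u 1 • γ (u 2)) '' {u : E3 | u 0 ∈ ({0} : Set ℝ)}) = 0 := by
    refine null_image_of_locLip (FrameOn.null_coord (by simp)) fun u _ => ?_
    have hc : ContDiffAt ℝ 1 (fun q : E3 × ℝ => q.2 • q.1) (γ (u 2), u 1) :=
      contDiffAt_snd.smul contDiffAt_fst
    obtain ⟨K, s, hs, hL⟩ := hc.exists_lipschitzOnWith
    have hJ := ((hγ.comp (FrameOn.lip_coord 2)).prodMk (FrameOn.lip_coord 1))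
    exact ⟨_, _, mem_nhdsWithin_of_mem_nhds (hJ.continuous.continuousAt.preimage_mem_nhds hs),
      LipschitzOnWith.comp (f := fun u : E3 => (γ (u 2), u 1)) hL (hJ.lipschitzOnWith)
        (mapsTo_preimage _ _)⟩
  refine measure_mono_null ?_ hnull
  intro x hx
  by_contra hcon
  apply hx
  show Mfun γ B x = 0
  unfold Mfun
  split_ifs with h
  · have : {t ∈ B | ⟪γ t, x⟫ = ‖x‖} = ∅ := by
      by_contra hne
      obtain ⟨t, ht, htx⟩ := nonempty_iff_ne_empty.2 hne
      apply hcon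
      refine ⟨!₂[0, ‖x‖, t], by simp, ?_⟩
      have h1 : ⟪γ t, x⟫ = ‖γ t‖ * ‖x‖ := by rw [htx, hB t ht, one_mul]
      have h2 := inner_eq_norm_mul_iff_real.1 h1
      rw [hB t ht, one_smul] at h2
      simpa using h2
    rw [this]; simp
  · rfl

lemma horizon_formula {a b : ℝ} {γ : ℝ → E3} {C : ℝ≥0} (hγ : LipschitzWith C γ)
    (hout : ∀ t ∈ Ico a b, 1 ≤ ‖γ t‖) :
    horizon a b γ * Measure.volumeIoiPow 2 (Iio ⟨1, mem_Ioi.2 one_pos⟩) =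
      ∫⁻ t in {t ∈ Ico a b | 1 < ‖γ t‖}, Kfun γ t := by
  obtain ⟨e0, f0, h0⟩ := frame_exists_0
  obtain ⟨e1, f1, h1⟩ := frame_exists_1
  set U0 : Set E3 := {g : E3 | g 1 ^ 2 + g 2 ^ 2 ≠ 0} with hU0
  set A : Set ℝ := {t ∈ Ico a b | 1 < ‖γ t‖} with hA
  have hAm : MeasurableSet A :=
    measurableSet_Ico.inter (measurableSet_lt measurable_const hγ.continuous.norm.measurable)
  set W : Set ℝ := γ ⁻¹' U0 with hW
  have hWm : MeasurableSet W := (h0.isOpen.preimage hγ.continuous).measurableSet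
  obtain ⟨m0, i0⟩ := h0.piece hγ (B := A ∩ W) (hAm.inter hWm) (fun t ht => ⟨ht.2, ht.1.2⟩)
  obtain ⟨m1, i1⟩ := h1.piece hγ (B := A \ W) (hAm.diff hWm) (fun t ht => ⟨by
    have h2 : γ t ∉ U0 := ht.2
    simp only [hU0, mem_setOf_eq, not_not] at h2
    have h3 : γ t 1 = 0 := by nlinarith [sq_nonneg (γ t 1), sq_nonneg (γ t 2)]
    have h4 : γ t 2 = 0 := by nlinarith [sq_nonneg (γ t 1), sq_nonneg (γ t 2)]
    have h5 : γ t ≠ 0 := by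
      intro h
      have := ht.1.2
      rw [h, norm_zero] at this
      linarith
    simp only [mem_setOf_eq, h4]
    intro h6
    apply h5
    have h7 : γ t 0 = 0 := by nlinarith
    ext i
    fin_cases i
    · exact h7
    · exact h3
    · exact h4, ht.1.2⟩)
  set Z : Set ℝ := {t ∈ Ico a b | ‖γ t‖ = 1} with hZ
  have hz := Mfun_unit hγ (B := Z) (fun t ht => ht.2)
  have hI : Ico a b = ((A ∩ W) ∪ (A \ W)) ∪ Z := by
    rw [inter_union_sdiff]
    ext t
    simp only [hA, hZ, mem_union, mem_setOf_eq]
    constructor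
    · intro ht
      rcases (hout t ht).lt_or_eq with h | h
      · exact Or.inl ⟨ht, h⟩
      · exact Or.inr ⟨ht, h.symm⟩
    · rintro (h | h) <;> exact h.1
  have hd1 : Disjoint (A ∩ W) (A \ W) := disjoint_sdiff_inter.symm
  have hd2 : Disjoint ((A ∩ W) ∪ (A \ W)) Z := by
    rw [inter_union_sdiff, Set.disjoint_left]
    intro t h h'
    exact absurd h'.2 h.2.ne'
  have hsum : ∀ x, Mfun γ (Ico a b) x = Mfun γ (A ∩ W) x + Mfun γ (A \ W) x + Mfun γ Z x := by
    intro x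
    rw [← Mfun_union hd1, ← Mfun_union hd2, ← hI]
  have hae : Mfun γ (Ico a b) =ᵐ[volume] fun x => Mfun γ (A ∩ W) x + Mfun γ (A \ W) x := by
    filter_upwards [hz] with x hx
    rw [hsum, hx, add_zero]
  have hm : AEMeasurable (Mfun γ (Ico a b)) := (m0.add m1).congr hae.symm
  have := sphere_to_ball
    (fun p => ({t ∈ Set.Ico a b | ⟪γ t, (p : E3)⟫ = 1}.encard : ℝ≥0∞)) (Mfun γ (Ico a b)) ?_ ?_ hm
  · rw [horizon, this, lintegral_congr_ae hae, lintegral_add_left' m0, i0, i1,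
      ← lintegral_inter_add_sdiff (Kfun γ) A hWm]
  · intro p l hl hl1
    have hn : ‖l • (p : E3)‖ = l := by
      rw [norm_smul, Real.norm_of_nonneg hl.le, norm_eq_of_mem_sphere, mul_one]
    unfold Mfun
    rw [hn, if_pos ⟨hl, hl1⟩]
    simp only [inner_smul_right]
    congr 2
    ext t
    simp only [mem_setOf_eq, and_congr_right_iff]
    intro _
    rw [mul_eq_left₀ hl.ne']
  · intro x hx
    unfold Mfun
    rw [if_neg]
    intro h
    linarith [h.2]


lemma norm_deriv_intervalIntegrable {γ : ℝ → E3} {C : ℝ≥0} (hγ : LipschitzWith C γ) (x y : ℝ) :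
    IntervalIntegrable (fun t => ‖deriv γ t‖) volume x y := by
  refine (intervalIntegrable_const (c := (C : ℝ))).mono_fun'
    (measurable_deriv γ).norm.aestronglyMeasurable ?_
  refine Filter.Eventually.of_forall fun t => ?_
  simp only [norm_norm]
  exact norm_deriv_le_of_lipschitz hγ

lemma norm_sub_le_integral {γ : ℝ → E3} {C : ℝ≥0} (hγ : LipschitzWith C γ) {x y : ℝ} (hxy : x ≤ y) :
    ‖γ y - γ x‖ ≤ ∫ t in x..y, ‖deriv γ t‖ := by
  set v := γ y - γ x with hv
  have hL : LipschitzWith (‖innerSL ℝ v‖₊ * C) (fun t => ⟪v, γ t⟫) :=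
    (innerSL ℝ v).lipschitz.comp hγ
  have hac := hL.lipschitzOnWith (s := uIcc x y) |>.absolutelyContinuousOnInterval
  have hF := hac.integral_deriv_eq_sub
  rw [← inner_sub_right, ← hv, real_inner_self_eq_norm_sq] at hF
  have hle : ∫ t in x..y, deriv (fun t => ⟪v, γ t⟫) t ≤ ∫ t in x..y, ‖v‖ * ‖deriv γ t‖ := by
    refine intervalIntegral.integral_mono_ae hxy hac.intervalIntegrable_deriv
      ((norm_deriv_intervalIntegrable hγ x y).const_mul _) ?_
    filter_upwards [hγ.ae_differentiableAt] with t ht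
    have h1 : HasDerivAt (fun t => ⟪v, γ t⟫) ⟪v, deriv γ t⟫ t := by
      have := (hasDerivAt_const t v).inner ℝ ht.hasDerivAt
      simpa using this
    rw [h1.deriv]
    exact real_inner_le_norm _ _
  rw [hF, intervalIntegral.integral_const_mul, sq] at hle
  rcases (norm_nonneg v).eq_or_lt with h | h
  · rw [← h]
    exact intervalIntegral.integral_nonneg hxy fun t _ => norm_nonneg _
  · exact le_of_mul_le_mul_left hle h

lemma eVariationOn_le_integral {γ : ℝ → E3} {C : ℝ≥0} (hγ : LipschitzWith C γ) {a b : ℝ}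
    (hab : a ≤ b) :
    eVariationOn γ (Icc a b) ≤ ENNReal.ofReal (∫ t in a..b, ‖deriv γ t‖) := by
  set F : ℝ → ℝ := fun y => ∫ t in a..y, ‖deriv γ t‖ with hF
  have hsub : ∀ x y, F y - F x = ∫ t in x..y, ‖deriv γ t‖ := fun x y =>
    intervalIntegral.integral_interval_sub_left (norm_deriv_intervalIntegrable hγ a y)
      (norm_deriv_intervalIntegrable hγ a x)
  have hmono : Monotone F := fun x y hxy => by
    have := intervalIntegral.integral_nonneg (μ := volume) hxy fun t _ => norm_nonneg (deriv γ t)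
    linarith [hsub x y]
  have h1 : eVariationOn γ (Icc a b) ≤ eVariationOn F (Icc a b) := by
    unfold eVariationOn
    refine iSup_mono fun p => Finset.sum_le_sum fun i _ => ?_
    have hp := p.2.2.1 (Nat.le_succ i)
    rw [edist_dist, edist_dist, dist_eq_norm, dist_eq_norm]
    refine ENNReal.ofReal_le_ofReal ((norm_sub_le_integral hγ hp).trans ?_)
    rw [← hsub]
    exact le_abs_self _
  refine h1.trans ?_
  have h2 := (hmono.monotoneOn (Icc a b)).eVariationOn_le (left_mem_Icc.2 hab) (right_mem_Icc.2 hab)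
  rw [inter_self] at h2
  rw [← hsub]
  exact h2

lemma ae_norm_deriv_eq {γ : ℝ → E3} {C : ℝ≥0} (hγ : LipschitzWith C γ) {a b : ℝ}
    (hab : a ≤ b) (hv : eVariationOn γ (Icc a b) = ENNReal.ofReal (C * (b - a))) :
    ∀ᵐ t, t ∈ Ioc a b → ‖deriv γ t‖ = C := by
  have h1 := eVariationOn_le_integral hγ hab
  rw [hv] at h1
  have h0 : 0 ≤ ∫ t in a..b, ‖deriv γ t‖ :=
    intervalIntegral.integral_nonneg hab fun t _ => norm_nonneg _
  have h2 := (ENNReal.ofReal_le_ofReal_iff h0).1 h1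
  have hii := norm_deriv_intervalIntegrable hγ a b
  have h3 : ∫ t in a..b, ((C : ℝ) - ‖deriv γ t‖) = 0 := by
    apply le_antisymm
    · rw [intervalIntegral.integral_sub intervalIntegrable_const hii]
      simp only [intervalIntegral.integral_const, smul_eq_mul]
      linarith
    · exact intervalIntegral.integral_nonneg hab fun t _ =>
        sub_nonneg.2 (norm_deriv_le_of_lipschitz hγ)
  rw [intervalIntegral.integral_of_le hab] at h3
  have hint := (intervalIntegrable_iff_integrableOn_Ioc_of_le hab).1
    ((intervalIntegrable_const (c := (C : ℝ))).sub hii)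
  rw [setIntegral_eq_zero_iff_of_nonneg_ae (Filter.Eventually.of_forall fun t =>
        sub_nonneg.2 (norm_deriv_le_of_lipschitz hγ)) hint] at h3
  have h4 := (ae_restrict_iff' measurableSet_Ioc).1 h3
  filter_upwards [h4] with t ht htm
  have := ht htm
  simp only [Pi.zero_apply] at this
  linarith

lemma lip_of_speed {γ : ℝ → E3} {C : ℝ≥0} {a b : ℝ}
    (h : HasConstantSpeedOnWith γ (Icc a b) C) : LipschitzOnWith C γ (Icc a b) := by
  have key : ∀ x ∈ Icc a b, ∀ y ∈ Icc a b, x ≤ y → edist (γ x) (γ y) ≤ C * edist x y := by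
    intro x hx y hy hxy
    have h1 := eVariationOn.edist_le γ (s := Icc a b ∩ Icc x y) (x := x) (y := y)
      ⟨hx, le_rfl, hxy⟩ ⟨hy, hxy, le_rfl⟩
    rw [h hx hy, ENNReal.ofReal_mul C.coe_nonneg, ENNReal.ofReal_coe_nnreal] at h1
    rwa [edist_comm x y, edist_dist y x, Real.dist_eq, abs_of_nonneg (sub_nonneg.2 hxy)]
  intro x hx y hy
  rcases le_total x y with hxy | hxy
  · exact key x hx y hy hxy
  · rw [edist_comm, edist_comm x y]
    exact key y hy x hx hxy

lemma extend_exists {γ : ℝ → E3} {C : ℝ≥0} {a b : ℝ} (hab : a ≤ b)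
    (h : LipschitzOnWith C γ (Icc a b)) :
    ∃ g : ℝ → E3, LipschitzWith C g ∧ ∀ t ∈ Icc a b, g t = γ t := by
  refine ⟨IccExtend hab ((Icc a b).restrict γ), ?_, fun t ht => ?_⟩
  · have h1 := (lipschitzOnWith_iff_restrict.1 h).comp (LipschitzWith.projIcc hab)
    rwa [mul_one] at h1
  · rw [IccExtend_of_mem _ _ ht]; rfl

lemma horizon_congr {a b : ℝ} {γ g : ℝ → E3} (h : ∀ t ∈ Icc a b, g t = γ t) :
    horizon a b γ = horizon a b g := by
  unfold horizon
  refine lintegral_congr fun p => ?_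
  congr 2
  ext t
  simp only [mem_setOf_eq, and_congr_right_iff]
  intro ht
  rw [h t (Ico_subset_Icc_self ht)]

lemma horizon_eq_aux {a b : ℝ} (hab : a < b) {γ₁ γ₂ : ℝ → E3} {C : ℝ≥0}
    (h₁ : LipschitzWith C γ₁) (h₂ : LipschitzWith C γ₂)
    (v₁ : eVariationOn γ₁ (Icc a b) = ENNReal.ofReal (C * (b - a)))
    (v₂ : eVariationOn γ₂ (Icc a b) = ENNReal.ofReal (C * (b - a)))
    (hheight : ∀ t ∈ Icc a b, ‖γ₁ t‖ = ‖γ₂ t‖)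
    (hout : ∀ t ∈ Icc a b, 1 ≤ ‖γ₁ t‖) :
    horizon a b γ₁ = horizon a b γ₂ := by
  have f₁ := horizon_formula h₁ (fun t ht => hout t (Ico_subset_Icc_self ht))
  have f₂ := horizon_formula h₂ (fun t ht => by
    rw [← hheight t (Ico_subset_Icc_self ht)]; exact hout t (Ico_subset_Icc_self ht))
  have hset : {t ∈ Ico a b | 1 < ‖γ₁ t‖} = {t ∈ Ico a b | 1 < ‖γ₂ t‖} := by
    ext t
    simp only [mem_setOf_eq, and_congr_right_iff]
    intro ht
    rw [hheight t (Ico_subset_Icc_self ht)]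
  have hm : MeasurableSet {t ∈ Ico a b | 1 < ‖γ₁ t‖} :=
    measurableSet_Ico.inter (measurableSet_lt measurable_const h₁.continuous.norm.measurable)
  have hint : ∫⁻ t in {t ∈ Ico a b | 1 < ‖γ₁ t‖}, Kfun γ₁ t =
      ∫⁻ t in {t ∈ Ico a b | 1 < ‖γ₁ t‖}, Kfun γ₂ t := by
    refine setLIntegral_congr_fun_ae hm ?_
    have hne : ∀ᵐ t : ℝ, t ≠ a := by
      rw [ae_iff]; simp
    filter_upwards [hne, ae_norm_deriv_eq h₁ hab.le v₁, ae_norm_deriv_eq h₂ hab.le v₂,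
      h₁.ae_differentiableAt, h₂.ae_differentiableAt] with t hta n₁ n₂ d₁ d₂ ht
    have hti : t ∈ Ioo a b := ⟨lt_of_le_of_ne ht.1.1 (Ne.symm hta), ht.1.2⟩
    have hin : ⟪γ₁ t, deriv γ₁ t⟫ = ⟪γ₂ t, deriv γ₂ t⟫ := by
      have e₁ := d₁.hasDerivAt.inner ℝ d₁.hasDerivAt
      have e₂ := d₂.hasDerivAt.inner ℝ d₂.hasDerivAt
      have e₃ := e₂.congr_of_eventuallyEq (f₁ := fun s => ⟪γ₁ s, γ₁ s⟫) (by
        filter_upwards [Ioo_mem_nhds hti.1 hti.2] with s hs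
        rw [real_inner_self_eq_norm_sq, real_inner_self_eq_norm_sq,
          hheight s (Ioo_subset_Icc_self hs)])
      have e₄ := e₁.unique e₃
      rw [real_inner_comm (γ₁ t) (deriv γ₁ t), real_inner_comm (γ₂ t) (deriv γ₂ t)] at e₄
      linarith
    unfold Kfun
    rw [hin, n₁ (Ioo_subset_Ioc_self hti), n₂ (Ioo_subset_Ioc_self hti),
      hheight t (Ioo_subset_Icc_self hti)]
  rw [hint, hset, ← f₂] at f₁
  refine (ENNReal.mul_left_inj ?_ ?_).1 f₁
  · rw [Measure.volumeIoiPow_apply_Iio]; simp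
    norm_num
  · rw [Measure.volumeIoiPow_apply_Iio]; simp

lemma horizon_eq_main
    (a b : ℝ) (hab : a < b) (γ₁ γ₂ : ℝ → E3) (C₁ C₂ : ℝ≥0)
    (hspeed₁ : HasConstantSpeedOnWith γ₁ (Set.Icc a b) C₁)
    (hspeed₂ : HasConstantSpeedOnWith γ₂ (Set.Icc a b) C₂)
    (hlen : eVariationOn γ₁ (Set.Icc a b) = eVariationOn γ₂ (Set.Icc a b))
    (hheight : ∀ t ∈ Set.Icc a b, ‖γ₁ t‖ = ‖γ₂ t‖)
    (hout : ∀ t ∈ Set.Icc a b, 1 ≤ ‖γ₁ t‖) :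
    horizon a b γ₁ = horizon a b γ₂ := by
  have w₁ := hspeed₁ (left_mem_Icc.2 hab.le) (right_mem_Icc.2 hab.le)
  have w₂ := hspeed₂ (left_mem_Icc.2 hab.le) (right_mem_Icc.2 hab.le)
  rw [inter_self] at w₁ w₂
  have hba : 0 < b - a := sub_pos.2 hab
  have hC : C₁ = C₂ := by
    have h := hlen
    rw [w₁, w₂, ENNReal.ofReal_eq_ofReal_iff (by positivity) (by positivity)] at h
    exact NNReal.coe_injective (mul_right_cancel₀ hba.ne' h)
  subst hC
  obtain ⟨g₁, l₁, e₁⟩ := extend_exists hab.le (lip_of_speed hspeed₁)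
  obtain ⟨g₂, l₂, e₂⟩ := extend_exists hab.le (lip_of_speed hspeed₂)
  rw [horizon_congr e₁, horizon_congr e₂]
  refine horizon_eq_aux hab l₁ l₂ ?_ ?_ ?_ ?_
  · rw [eVariationOn.congr (fun t ht => e₁ t ht), w₁]
  · rw [eVariationOn.congr (fun t ht => e₂ t ht), w₂]
  · intro t ht
    rw [e₁ t ht, e₂ t ht, hheight t ht]
  · intro t ht
    rw [e₁ t ht]
    exact hout t ht


/-- Two constant speed curves with the same length and the same height function
(`|γ₁(t)| = |γ₂(t)| ≥ 1`) have the same horizon, and hence the same efficiency. -/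
theorem horizon_eq_of_same_height_and_length
    (a b : ℝ) (hab : a < b) (γ₁ γ₂ : ℝ → E3) (C₁ C₂ : ℝ≥0)
    (hcont₁ : ContinuousOn γ₁ (Set.Icc a b))
    (hcont₂ : ContinuousOn γ₂ (Set.Icc a b))
    (hspeed₁ : HasConstantSpeedOnWith γ₁ (Set.Icc a b) C₁)
    (hspeed₂ : HasConstantSpeedOnWith γ₂ (Set.Icc a b) C₂)
    (hlen : eVariationOn γ₁ (Set.Icc a b) = eVariationOn γ₂ (Set.Icc a b))
    (hheight : ∀ t ∈ Set.Icc a b, ‖γ₁ t‖ = ‖γ₂ t‖)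
    (hout : ∀ t ∈ Set.Icc a b, 1 ≤ ‖γ₁ t‖) :
    horizon a b γ₁ = horizon a b γ₂ ∧
      (horizon a b γ₁).toReal / (eVariationOn γ₁ (Set.Icc a b)).toReal =
        (horizon a b γ₂).toReal / (eVariationOn γ₂ (Set.Icc a b)).toReal := by
  have h := horizon_eq_main a b hab γ₁ γ₂ C₁ C₂ hspeed₁ hspeed₂ hlen hheight hout
  exact ⟨h, by rw [h, hlen]⟩
end
end

section
/- For all real numbers h > 1 and α with arcsin(1/h) ≤ α ≤ π/2, one has ∫_0^{2π} (1/h²)·| √(h² − 1)·sin(α)·cos(θ) + cos(α) | dθ = (4/h²)·( √(h²·sin²(α) − 1) + cos(α)·arcsin( cot(α)/√(h² − 1) ) ). -/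
open Real

lemma aux_int (A c a b : ℝ) :
    ∫ θ in a..b, (A * Real.cos θ + c) = A * (Real.sin b - Real.sin a) + c * (b - a) := by
  rw [intervalIntegral.integral_add (Continuous.intervalIntegrable (by fun_prop) _ _)
    (Continuous.intervalIntegrable (by fun_prop) _ _)]
  simp [integral_cos]
  ring

lemma aux_abs (A p : ℝ) (hA : 0 < A) (hp0 : 0 ≤ p) (hp1 : p ≤ π / 2) :
    ∫ θ in (0:ℝ)..(2 * π), |A * Real.cos θ + A * Real.sin p|
      = 4 * (A * Real.cos p + A * Real.sin p * p) := by
  have hpi := Real.pi_pos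
  have hc : Real.cos (π / 2 + p) = - Real.sin p := by
    rw [add_comm, Real.cos_add_pi_div_two]
  have hs : Real.sin (π / 2 + p) = Real.cos p := by
    rw [add_comm, Real.sin_add_pi_div_two]
  have hs2 : Real.sin (2 * π - (π / 2 + p)) = - Real.cos p := by
    rw [Real.sin_two_pi_sub, hs]
  have ii : ∀ a b : ℝ, IntervalIntegrable (fun θ => |A * Real.cos θ + A * Real.sin p|)
      MeasureTheory.volume a b := fun a b => Continuous.intervalIntegrable (by fun_prop) _ _
  rw [← intervalIntegral.integral_add_adjacent_intervals (ii 0 (2 * π - (π / 2 + p)))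
      (ii _ (2 * π)),
    ← intervalIntegral.integral_add_adjacent_intervals (ii 0 (π / 2 + p)) (ii _ _)]
  have h1 : ∫ θ in (0:ℝ)..(π / 2 + p), |A * Real.cos θ + A * Real.sin p|
      = ∫ θ in (0:ℝ)..(π / 2 + p), (A * Real.cos θ + A * Real.sin p) := by
    apply intervalIntegral.integral_congr
    intro x hx
    rw [Set.uIcc_of_le (by linarith)] at hx
    have := Real.cos_le_cos_of_nonneg_of_le_pi hx.1 (by linarith) hx.2
    apply abs_of_nonneg
    nlinarith
  have h2 : ∫ θ in (π / 2 + p)..(2 * π - (π / 2 + p)), |A * Real.cos θ + A * Real.sin p|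
      = ∫ θ in (π / 2 + p)..(2 * π - (π / 2 + p)), -(A * Real.cos θ + A * Real.sin p) := by
    apply intervalIntegral.integral_congr
    intro x hx
    rw [Set.uIcc_of_le (by linarith)] at hx
    have : Real.cos x ≤ Real.cos (π / 2 + p) := by
      rcases le_total x π with hxp | hxp
      · exact Real.cos_le_cos_of_nonneg_of_le_pi (by linarith) hxp hx.1
      · rw [← Real.cos_two_pi_sub x]
        exact Real.cos_le_cos_of_nonneg_of_le_pi (by linarith) (by linarith) (by linarith [hx.2])
    apply abs_of_nonpos
    nlinarith
  have h3 : ∫ θ in (2 * π - (π / 2 + p))..(2 * π), |A * Real.cos θ + A * Real.sin p|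
      = ∫ θ in (2 * π - (π / 2 + p))..(2 * π), (A * Real.cos θ + A * Real.sin p) := by
    apply intervalIntegral.integral_congr
    intro x hx
    rw [Set.uIcc_of_le (by linarith)] at hx
    have : Real.cos (π / 2 + p) ≤ Real.cos x := by
      rw [← Real.cos_two_pi_sub x]
      exact Real.cos_le_cos_of_nonneg_of_le_pi (by linarith [hx.2]) (by linarith)
        (by linarith [hx.1])
    apply abs_of_nonneg
    nlinarith
  rw [h1, h2, h3, intervalIntegral.integral_neg, aux_int, aux_int, aux_int, hs, hs2,
    Real.sin_two_pi, Real.sin_zero]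
  ring

/-- **Closed form of the instantaneous efficiency integral.** For `h > 1` and
`arcsin(1/h) ≤ α ≤ π/2`,
`∫₀^{2π} (1/h²)|√(h²−1) sin α cos θ + cos α| dθ
  = (4/h²)(√(h² sin²α − 1) + cos α · arcsin(cot α/√(h²−1)))`. -/
theorem instantaneous_efficiency_integral
    (h α : ℝ) (hh : 1 < h)
    (hα₁ : Real.arcsin (1 / h) ≤ α) (hα₂ : α ≤ π / 2) :
    ∫ θ in (0:ℝ)..(2 * π),
        (1 / h ^ 2) *
          |Real.sqrt (h ^ 2 - 1) * Real.sin α * Real.cos θ + Real.cos α| =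
      (4 / h ^ 2) *
        (Real.sqrt (h ^ 2 * Real.sin α ^ 2 - 1) +
          Real.cos α * Real.arcsin ((Real.cos α / Real.sin α) / Real.sqrt (h ^ 2 - 1))) := by
  have h0 : 0 < h := by linarith
  have hinv : 0 < 1 / h := by positivity
  have hinv1 : 1 / h ≤ 1 := by rw [div_le_one h0]; exact hh.le
  have ha0 : 0 < α := lt_of_lt_of_le (Real.arcsin_pos.2 hinv) hα₁
  have hsin : 1 / h ≤ Real.sin α :=
    (Real.arcsin_le_iff_le_sin ⟨by linarith, hinv1⟩ ⟨by linarith, hα₂⟩).1 hα₁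
  have hs0 : 0 < Real.sin α := lt_of_lt_of_le hinv hsin
  have hc0 : 0 ≤ Real.cos α := Real.cos_nonneg_of_neg_pi_div_two_le_of_le (by linarith) hα₂
  have hq : 0 < h ^ 2 - 1 := by nlinarith
  have hr : 0 < √(h ^ 2 - 1) := Real.sqrt_pos.2 hq
  have hr2 := Real.sq_sqrt hq.le
  have hsh : 1 ≤ h * Real.sin α := by
    rw [div_le_iff₀ h0] at hsin; linarith
  have hsc := Real.sin_sq_add_cos_sq α
  rw [div_div, mul_comm (Real.sin α) (√(h ^ 2 - 1))]
  have hA2 : (√(h ^ 2 - 1) * Real.sin α) ^ 2 - Real.cos α ^ 2 = h ^ 2 * Real.sin α ^ 2 - 1 := by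
    rw [mul_pow, hr2]; linarith
  have hApos : 0 < √(h ^ 2 - 1) * Real.sin α := by positivity
  generalize √(h ^ 2 - 1) * Real.sin α = A at *
  rw [← hA2]
  have hcA : Real.cos α ≤ A := by
    refine le_of_abs_le (abs_le_of_sq_le_sq ?_ hApos.le)
    nlinarith
  generalize Real.cos α = c at *
  have hx0 : 0 ≤ c / A := by positivity
  have hx1 : c / A ≤ 1 := (div_le_one hApos).2 hcA
  have key := aux_abs A (Real.arcsin (c / A)) hApos (Real.arcsin_nonneg.2 hx0)
    (Real.arcsin_le_pi_div_two _)
  have hAc : A * (c / A) = c := by field_simp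
  rw [Real.sin_arcsin (by linarith) hx1, hAc, Real.cos_arcsin] at key
  have hsq : A * √(1 - (c / A) ^ 2) = √(A ^ 2 - c ^ 2) := by
    have : A ^ 2 - c ^ 2 = A ^ 2 * (1 - (c / A) ^ 2) := by field_simp
    rw [this, Real.sqrt_mul (by positivity), Real.sqrt_sq hApos.le]
  rw [hsq] at key
  rw [intervalIntegral.integral_const_mul, key]
  ring
end

section
/- For all real numbers h ≥ √2 and α with arcsin(√2/h) ≤ α ≤ π/2, one has (4/h²)·( √(h²·sin²(α) − 1) + cos(α)·arcsin( cot(α)/√(h² − 1) ) ) ≤ 4·√(h² − 1)/h² ≤ 2. -/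
open Real

/-- **Bound on the instantaneous efficiency for heights at least `√2`.** For `h ≥ √2` and
`arcsin(√2/h) ≤ α ≤ π/2`,
`𝓔(h,α) = (4/h²)(√(h² sin²α − 1) + cos α · arcsin(cot α/√(h²−1))) ≤ 4√(h²−1)/h² ≤ 2`. -/
theorem instantaneous_efficiency_le_two
    (h α : ℝ) (hh : Real.sqrt 2 ≤ h)
    (hα₁ : Real.arcsin (Real.sqrt 2 / h) ≤ α) (hα₂ : α ≤ π / 2) :
    (4 / h ^ 2) *
        (Real.sqrt (h ^ 2 * Real.sin α ^ 2 - 1) +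
          Real.cos α * Real.arcsin ((Real.cos α / Real.sin α) / Real.sqrt (h ^ 2 - 1))) ≤
      4 * Real.sqrt (h ^ 2 - 1) / h ^ 2 ∧
    4 * Real.sqrt (h ^ 2 - 1) / h ^ 2 ≤ 2 := by
  have hpi := Real.pi_pos
  have h2 : 0 < Real.sqrt 2 := by positivity
  have h22 : Real.sqrt 2 ^ 2 = 2 := Real.sq_sqrt (by norm_num)
  have hpos : 0 < h := lt_of_lt_of_le h2 hh
  have hsq : 2 ≤ h ^ 2 := by nlinarith
  have hx0 : 0 < Real.sqrt 2 / h := by positivity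
  have hx1 : Real.sqrt 2 / h ≤ 1 := (div_le_one hpos).2 hh
  have ha0 : 0 < α := lt_of_lt_of_le (Real.arcsin_pos.2 hx0) hα₁
  have hs : Real.sqrt 2 / h ≤ Real.sin α :=
    (Real.arcsin_le_iff_le_sin ⟨by linarith, hx1⟩ ⟨by linarith, hα₂⟩).1 hα₁
  have hc : 0 ≤ Real.cos α := Real.cos_nonneg_of_neg_pi_div_two_le_of_le (by linarith) hα₂
  have hsc := Real.sin_sq_add_cos_sq α
  have hs0 : 0 < Real.sin α := lt_of_lt_of_le hx0 hs
  have hhs : Real.sqrt 2 ≤ Real.sin α * h := (div_le_iff₀ hpos).1 hs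
  generalize Real.sin α = s at *
  generalize Real.cos α = c at *
  have hhs2 : 2 ≤ h ^ 2 * s ^ 2 := by nlinarith
  have hk2 : Real.sqrt (h ^ 2 - 1) ^ 2 = h ^ 2 - 1 := Real.sq_sqrt (by linarith)
  have hk1 : 1 ≤ Real.sqrt (h ^ 2 - 1) := Real.one_le_sqrt.2 (by linarith)
  have hA2 : Real.sqrt (h ^ 2 * s ^ 2 - 1) ^ 2 = h ^ 2 * s ^ 2 - 1 := Real.sq_sqrt (by linarith)
  have hA1 : 1 ≤ Real.sqrt (h ^ 2 * s ^ 2 - 1) := Real.one_le_sqrt.2 (by linarith)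
  generalize Real.sqrt (h ^ 2 - 1) = k at *
  generalize Real.sqrt (h ^ 2 * s ^ 2 - 1) = A at *
  have hk0 : 0 < k := by linarith
  have hA0 : 0 < A := by linarith
  refine ⟨?_, ?_⟩
  · have hy0 : 0 ≤ c / s / k := by positivity
    have hy : 1 - (c / s / k) ^ 2 = (A / (s * k)) ^ 2 := by
      field_simp
      rw [hA2, hk2]
      linear_combination (-1 : ℝ) * hsc
    have hpA : 0 < A / (s * k) := by positivity
    have hy1 : c / s / k < 1 := by nlinarith [pow_pos hpA 2]
    have hth : Real.arcsin (c / s / k) ≤ c / A := by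
      have := Real.le_tan (Real.arcsin_nonneg.2 hy0) (Real.arcsin_lt_pi_div_two.2 hy1)
      rw [Real.tan_arcsin, hy, Real.sqrt_sq hpA.le] at this
      refine this.trans (le_of_eq ?_)
      field_simp
    have hrel : h ^ 2 * c ^ 2 = k ^ 2 - A ^ 2 := by
      rw [hA2, hk2]; linear_combination h ^ 2 * hsc
    have hkA : 1 ≤ k * A := by nlinarith
    have hc2 : c ^ 2 ≤ (k - A) * A := by
      have e1 : (k ^ 2 + 1) * c ^ 2 = (k - A) * (k + A) := by
        rw [hk2]; linear_combination hrel
      have hkA' : 0 ≤ k - A := by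
        by_contra hcon
        push Not at hcon
        nlinarith [mul_pos_of_neg_of_neg hcon (neg_lt_zero.2 (add_pos hk0 hA0)), sq_nonneg (h * c)]
      have e2 : k + A ≤ (k ^ 2 + 1) * A := by nlinarith
      have e3 : (k ^ 2 + 1) * c ^ 2 ≤ (k ^ 2 + 1) * ((k - A) * A) := by
        rw [e1]; nlinarith [mul_le_mul_of_nonneg_left e2 hkA']
      exact le_of_mul_le_mul_left e3 (by positivity)
    have hm : c * Real.arcsin (c / s / k) ≤ k - A := by
      refine (mul_le_mul_of_nonneg_left hth hc).trans ?_
      rw [← mul_div_assoc, div_le_iff₀ hA0]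
      linarith [hc2, sq c]
    rw [div_mul_eq_mul_div]
    gcongr
    linarith
  · rw [div_le_iff₀ (by positivity)]
    nlinarith [sq_nonneg (k - 1)]
end
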